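/- Let z = (z₁,z₂) ∈ [0,1)², C_z = [z₁,1) × [z₂,1), and let j ∈ ℕ₀², m ∈ 𝔻_j be such that z ∈ I_{j,m}. Then μ_{j,m}^z := ∫_{[0,1)²} χ_{C_z}(x)·h_{j,m}(x) dx equals: (z₁ − m₁/2^{j₁})(z₂ − m₂/2^{j₂}) if z lies in the left-lower quarter I_{j,m}^{+,+}; (z₁ − m₁/2^{j₁})((m₂+1)/2^{j₂} − z₂) if z lies in the left-upper quarter I_{j,m}^{+,−}; ((m₁+1)/2^{j₁} − z₁)(z₂ − m₂/2^{j₂}) if z lies in the right-lower quarter I_{j,m}^{−,+}; and ((m₁+1)/2^{j₁} − z₁)((m₂+1)/2^{j₂} − z₂) if z lies in the right-upper quarter I_{j,m}^{−,−}. -/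

import Mathlib

open MeasureTheory

noncomputable section

/-- The half-open unit square `[0,1) × [0,1)` in `ℝ × ℝ`. -/
def unitSq : Set (ℝ × ℝ) := Set.Ico (0:ℝ) 1 ×ˢ Set.Ico (0:ℝ) 1

/-- The dyadic interval `I_{j,m}`. -/
def dyadic (j m : ℕ × ℕ) : Set (ℝ × ℝ) :=
  Set.Ico ((m.1:ℝ)/2^j.1) (((m.1:ℝ)+1)/2^j.1) ×ˢ
    Set.Ico ((m.2:ℝ)/2^j.2) (((m.2:ℝ)+1)/2^j.2)

/-- The one-dimensional Haar function adapted to `[m/2^j, (m+1)/2^j)`. -/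
def haar1 (j m : ℕ) (t : ℝ) : ℝ :=
  if (m:ℝ)/2^j ≤ t ∧ t < (2*(m:ℝ)+1)/2^(j+1) then 1
  else if (2*(m:ℝ)+1)/2^(j+1) ≤ t ∧ t < ((m:ℝ)+1)/2^j then -1
  else 0

/-- The two-dimensional Haar function `h_{j,m}`. -/
def haar (j m : ℕ × ℕ) (x : ℝ × ℝ) : ℝ := haar1 j.1 m.1 x.1 * haar1 j.2 m.2 x.2

/-- The characteristic function of `C_z = [z₁,1) × [z₂,1)`. -/
def chiC (z x : ℝ × ℝ) : ℝ :=
  if z.1 ≤ x.1 ∧ x.1 < 1 ∧ z.2 ≤ x.2 ∧ x.2 < 1 then 1 else 0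

/-!
The function `h_{j,m}` is a tensor product and `C_z` is a box, so `μ_{j,m}^z` is the product over
the two coordinates of the integrals of the one-dimensional Haar function over `[z_i, 1)`. Each of
these is a difference of two lengths: to the left of the midpoint of the dyadic interval it is minus
the distance from `z_i` to the left endpoint, because both halves have the same length; to the right
of the midpoint only the negative half is left, giving minus the distance to the right endpoint.
The two signs cancel in the product.
-/

open Set

lemma setIntegral_Ico_indicator_Ico_one (z d a b : ℝ) :
    ∫ t in Ico z d, (Ico a b).indicator (1 : ℝ → ℝ) t = max (min b d - max a z) 0 := by
  rw [integral_indicator_one measurableSet_Ico, measureReal_restrict_apply measurableSet_Ico,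
    Ico_inter_Ico, Real.volume_real_Ico]

lemma chiC_mul_eq_indicator (z : ℝ × ℝ) (f : ℝ × ℝ → ℝ) (x : ℝ × ℝ) :
    chiC z x * f x = (Ico z.1 1 ×ˢ Ico z.2 1).indicator f x := by
  simp only [chiC, indicator_apply, mem_prod, mem_Ico, and_assoc, ite_mul, one_mul, zero_mul]

lemma setIntegral_unitSq_chiC_mul {z : ℝ × ℝ} (hz : 0 ≤ z) (f : ℝ × ℝ → ℝ) :
    ∫ x in unitSq, chiC z x * f x = ∫ x in Ico z.1 1 ×ˢ Ico z.2 1, f x := by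
  have hsub : Ico z.1 1 ×ˢ Ico z.2 1 ⊆ unitSq :=
    prod_mono (Ico_subset_Ico_left hz.1) (Ico_subset_Ico_left hz.2)
  simp only [chiC_mul_eq_indicator]
  rw [setIntegral_indicator (measurableSet_Ico.prod measurableSet_Ico),
    inter_eq_self_of_subset_right hsub]

lemma setIntegral_prod_haar (j m : ℕ × ℕ) (s t : Set ℝ) :
    ∫ x in s ×ˢ t, haar j m x = (∫ u in s, haar1 j.1 m.1 u) * ∫ v in t, haar1 j.2 m.2 v :=
  setIntegral_prod_mul (haar1 j.1 m.1) (haar1 j.2 m.2) s t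

section Haar1

variable {j m : ℕ} {z d : ℝ}

lemma dyadic_midpoint_eq (j m : ℕ) :
    (2 * (m : ℝ) + 1) / 2 ^ (j + 1) = ((m : ℝ) / 2 ^ j + ((m : ℝ) + 1) / 2 ^ j) / 2 := by
  rw [pow_succ]
  field_simp
  ring

lemma dyadic_left_le_right (j m : ℕ) : (m : ℝ) / 2 ^ j ≤ ((m : ℝ) + 1) / 2 ^ j := by
  gcongr
  exact le_add_of_nonneg_right zero_le_one

lemma dyadic_right_le_one (hm : m < 2 ^ j) : ((m : ℝ) + 1) / 2 ^ j ≤ 1 := by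
  rw [div_le_one (by positivity)]
  exact_mod_cast hm

lemma haar1_eq_indicator_sub_indicator (j m : ℕ) (t : ℝ) :
    haar1 j m t =
      (Ico ((m : ℝ) / 2 ^ j) ((2 * (m : ℝ) + 1) / 2 ^ (j + 1))).indicator (1 : ℝ → ℝ) t -
        (Ico ((2 * (m : ℝ) + 1) / 2 ^ (j + 1)) (((m : ℝ) + 1) / 2 ^ j)).indicator
          (1 : ℝ → ℝ) t := by
  simp only [haar1, indicator_apply, mem_Ico, Pi.one_apply]
  split_ifs <;> grind

lemma setIntegral_Ico_haar1 (j m : ℕ) (z d : ℝ) :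
    ∫ t in Ico z d, haar1 j m t =
      max (min ((2 * (m : ℝ) + 1) / 2 ^ (j + 1)) d - max ((m : ℝ) / 2 ^ j) z) 0 -
        max (min (((m : ℝ) + 1) / 2 ^ j) d - max ((2 * (m : ℝ) + 1) / 2 ^ (j + 1)) z) 0 := by
  have integrable_indicator (a b : ℝ) :
      IntegrableOn ((Ico a b).indicator (1 : ℝ → ℝ)) (Ico z d) :=
    (integrableOn_const (C := (1 : ℝ)) measure_Ico_lt_top.ne).indicator measurableSet_Ico
  simp only [haar1_eq_indicator_sub_indicator]
  rw [integral_sub (integrable_indicator _ _) (integrable_indicator _ _),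
    setIntegral_Ico_indicator_Ico_one, setIntegral_Ico_indicator_Ico_one]

lemma setIntegral_Ico_haar1_of_le_midpoint (hd : ((m : ℝ) + 1) / 2 ^ j ≤ d)
    (hz : (m : ℝ) / 2 ^ j ≤ z) (hz' : z ≤ (2 * (m : ℝ) + 1) / 2 ^ (j + 1)) :
    ∫ t in Ico z d, haar1 j m t = -(z - (m : ℝ) / 2 ^ j) := by
  have hmid := dyadic_midpoint_eq j m
  have hmid_le : (2 * (m : ℝ) + 1) / 2 ^ (j + 1) ≤ ((m : ℝ) + 1) / 2 ^ j := by linarith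
  rw [setIntegral_Ico_haar1, min_eq_left (hmid_le.trans hd), min_eq_left hd, max_eq_right hz,
    max_eq_left hz', max_eq_left (sub_nonneg.2 hz'), max_eq_left (sub_nonneg.2 hmid_le)]
  linarith

lemma setIntegral_Ico_haar1_of_midpoint_le (hd : ((m : ℝ) + 1) / 2 ^ j ≤ d)
    (hz : (2 * (m : ℝ) + 1) / 2 ^ (j + 1) ≤ z) (hz' : z ≤ ((m : ℝ) + 1) / 2 ^ j) :
    ∫ t in Ico z d, haar1 j m t = -(((m : ℝ) + 1) / 2 ^ j - z) := by
  have hleft : (m : ℝ) / 2 ^ j ≤ z := by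
    linarith [dyadic_midpoint_eq j m, dyadic_left_le_right j m]
  rw [setIntegral_Ico_haar1, min_eq_left (hz.trans (hz'.trans hd)), min_eq_left hd,
    max_eq_right hleft, max_eq_right hz, max_eq_right (sub_nonpos.2 hz),
    max_eq_left (sub_nonneg.2 hz')]
  exact zero_sub _

end Haar1

/-- For `z ∈ I_{j,m}`, the value of `μ_{j,m}^z = ∫_{[0,1)²} χ_{C_z}·h_{j,m}` depending
on which quarter of `I_{j,m}` contains `z` (the quarters being obtained by halving
`I_{j,m}` in both coordinates). -/
theorem integral_chiC_haar_of_mem (z : ℝ × ℝ) (hz : z ∈ unitSq)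
    (j m : ℕ × ℕ) (hm1 : m.1 < 2 ^ j.1) (hm2 : m.2 < 2 ^ j.2)
    (hzm : z ∈ dyadic j m) :
    (z.1 < (2*(m.1:ℝ)+1)/2^(j.1+1) → z.2 < (2*(m.2:ℝ)+1)/2^(j.2+1) →
      ∫ x in unitSq, chiC z x * haar j m x
        = (z.1 - (m.1:ℝ)/2^j.1) * (z.2 - (m.2:ℝ)/2^j.2)) ∧
    (z.1 < (2*(m.1:ℝ)+1)/2^(j.1+1) → (2*(m.2:ℝ)+1)/2^(j.2+1) ≤ z.2 →
      ∫ x in unitSq, chiC z x * haar j m x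
        = (z.1 - (m.1:ℝ)/2^j.1) * (((m.2:ℝ)+1)/2^j.2 - z.2)) ∧
    ((2*(m.1:ℝ)+1)/2^(j.1+1) ≤ z.1 → z.2 < (2*(m.2:ℝ)+1)/2^(j.2+1) →
      ∫ x in unitSq, chiC z x * haar j m x
        = (((m.1:ℝ)+1)/2^j.1 - z.1) * (z.2 - (m.2:ℝ)/2^j.2)) ∧
    ((2*(m.1:ℝ)+1)/2^(j.1+1) ≤ z.1 → (2*(m.2:ℝ)+1)/2^(j.2+1) ≤ z.2 →
      ∫ x in unitSq, chiC z x * haar j m x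
        = (((m.1:ℝ)+1)/2^j.1 - z.1) * (((m.2:ℝ)+1)/2^j.2 - z.2)) := by
  obtain ⟨⟨hl₁, hr₁⟩, hl₂, hr₂⟩ := hzm
  have hone₁ := dyadic_right_le_one hm1
  have hone₂ := dyadic_right_le_one hm2
  rw [setIntegral_unitSq_chiC_mul ⟨hz.1.1, hz.2.1⟩, setIntegral_prod_haar]
  refine ⟨fun h₁ h₂ ↦ ?_, fun h₁ h₂ ↦ ?_, fun h₁ h₂ ↦ ?_, fun h₁ h₂ ↦ ?_⟩
  · rw [setIntegral_Ico_haar1_of_le_midpoint hone₁ hl₁ h₁.le,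
      setIntegral_Ico_haar1_of_le_midpoint hone₂ hl₂ h₂.le, neg_mul_neg]
  · rw [setIntegral_Ico_haar1_of_le_midpoint hone₁ hl₁ h₁.le,
      setIntegral_Ico_haar1_of_midpoint_le hone₂ h₂ hr₂.le, neg_mul_neg]
  · rw [setIntegral_Ico_haar1_of_midpoint_le hone₁ h₁ hr₁.le,
      setIntegral_Ico_haar1_of_le_midpoint hone₂ hl₂ h₂.le, neg_mul_neg]
  · rw [setIntegral_Ico_haar1_of_midpoint_le hone₁ h₁ hr₁.le,
      setIntegral_Ico_haar1_of_midpoint_le hone₂ h₂ hr₂.le, neg_mul_neg]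

end
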